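/- Let p > 3 be a prime. Then ∑_{k=1}^{(p-1)/2} (p/2 - k)·H(2;2k)/((p+1-2k)(p+2k)) ≡ q_p(2) - (3/16)·B_{p-3} modulo p (as rational numbers). -/

import Mathlib

/-- Two rationals `a` and `b` are congruent modulo `p^r`:
the `p`-adic valuation of `a - b` is at least `r`, i.e. `a - b = c * p^r`
with the denominator of `c` not divisible by `p`. -/
def ratCongr (p r : ℕ) (a b : ℚ) : Prop :=
  ∃ c : ℚ, a - b = c * (p : ℚ) ^ r ∧ ¬ (p ∣ c.den)

/-- The Fermat quotient `q_p(2) = (2^(p-1) - 1)/p` (an integer for odd primes),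
viewed as a rational number. -/
def fermatQ (p : ℕ) : ℚ := ((2 : ℚ) ^ (p - 1) - 1) / p

/-- The generalized harmonic number of order 2: `H(2;n) = ∑_{j=1}^n 1/j^2`. -/
def harmonic2 (n : ℕ) : ℚ := ∑ j ∈ Finset.Icc 1 n, 1 / (j : ℚ) ^ 2

/-!
Write `p = 2 * m + 1` and `P n = ∑ j < n, j ^ (p - 3)`, which is `H(2; n - 1)` modulo `p`. Modulo
`p` the sum in question is half of `∑ P (2 * k + 1) / (2 * k - 1)` over `1 ≤ k ≤ m`. Since
`P (p - n) = -P (n + 1)`, the reflection `k ↦ m + 1 - k` turns this into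
`∑ P (2 * k) / (2 * k) - ∑ 1 / ((2 * k - 1) ^ 2 * (2 * k))`.

* In the second sum, partial fractions leave the alternating harmonic sum, which is
  `2 * q_p(2)` because `(p - 1).choose j = (-1) ^ j`, and a power sum over the odd residues, which
  vanishes.
* In the first sum, expand `P (2 * k) / (2 * k)` by Faulhaber's formula and sum over `k`. The
  resulting power sums over the even residues are Bernoulli numbers again, as `m + 1 = 1 / 2` and
  the Bernoulli polynomials have known values at `1 / 2`. By parity only the terms with
  `B_1 * B_(p - 3)` and `B_(p - 3)` survive.
-/

open Finset
open scoped Nat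

section Reduction

variable {K : Type*} [DivisionRing K]

/-- The rational number `x` can be reduced to `K`, in the sense that its denominator is invertible
there, and its image is `y`. For `K = ZMod p` this says that `x` is `p`-integral with residue class
`y`; the first condition excludes the junk values of `Rat.cast` in positive characteristic. -/
def ReducesTo (x : ℚ) (y : K) : Prop :=
  (x.den : K) ≠ 0 ∧ (x : K) = y

namespace ReducesTo

variable {x x' : ℚ} {y y' : K}

theorem cast_eq (h : ReducesTo x y) : (x : K) = y := h.2

theorem cast (h : ReducesTo x y) : ReducesTo x (x : K) := ⟨h.1, rfl⟩

theorem unique (h : ReducesTo x y) (h' : ReducesTo x y') : y = y' := h.2.symm.trans h'.2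

theorem intCast_div (n : ℤ) {d : ℤ} (hd : (d : K) ≠ 0) : ReducesTo (n / d : ℚ) (n / d : K) := by
  rw [← Rat.divInt_eq_div]
  refine ⟨fun h => hd ?_, Rat.cast_divInt_of_ne_zero n hd⟩
  obtain ⟨c, hc⟩ := Rat.den_dvd n d
  rw [hc, Int.cast_mul, Int.cast_natCast, h, zero_mul]

theorem natCast (n : ℕ) : ReducesTo (n : ℚ) (n : K) := by
  simpa using intCast_div (K := K) n (d := 1) (by simp)

theorem add (h : ReducesTo x y) (h' : ReducesTo x' y') : ReducesTo (x + x') (y + y') := by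
  refine ⟨fun h0 => mul_ne_zero h.1 h'.1 ?_, by rw [Rat.cast_add_of_ne_zero h.1 h'.1, h.2, h'.2]⟩
  obtain ⟨c, hc⟩ := Rat.add_den_dvd x x'
  rw [← Nat.cast_mul, hc, Nat.cast_mul, h0, zero_mul]

theorem mul (h : ReducesTo x y) (h' : ReducesTo x' y') : ReducesTo (x * x') (y * y') := by
  refine ⟨fun h0 => mul_ne_zero h.1 h'.1 ?_, by rw [Rat.cast_mul_of_ne_zero h.1 h'.1, h.2, h'.2]⟩
  obtain ⟨c, hc⟩ := Rat.mul_den_dvd x x'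
  rw [← Nat.cast_mul, hc, Nat.cast_mul, h0, zero_mul]

theorem neg (h : ReducesTo x y) : ReducesTo (-x) (-y) :=
  ⟨by simpa using h.1, by rw [Rat.cast_neg, h.2]⟩

theorem sub (h : ReducesTo x y) (h' : ReducesTo x' y') : ReducesTo (x - x') (y - y') := by
  simpa only [sub_eq_add_neg] using h.add h'.neg

theorem inv (h : ReducesTo x y) (hy : y ≠ 0) : ReducesTo x⁻¹ y⁻¹ := by
  obtain ⟨_, rfl⟩ := h
  rw [Rat.cast_def] at hy ⊢
  have hnum : (x.num : K) ≠ 0 := fun h0 => hy (by rw [h0, zero_div])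
  have hinv := intCast_div (K := K) x.den hnum
  rwa [Int.cast_natCast, ← inv_div, Int.cast_natCast, Rat.num_div_den, ← inv_div] at hinv

theorem div (h : ReducesTo x y) (h' : ReducesTo x' y') (hy' : y' ≠ 0) :
    ReducesTo (x / x') (y / y') := by
  simpa only [div_eq_mul_inv] using h.mul (h'.inv hy')

theorem pow (h : ReducesTo x y) (n : ℕ) : ReducesTo (x ^ n) (y ^ n) := by
  induction n with
  | zero => simpa using natCast (K := K) 1
  | succ n ih => simpa only [pow_succ] using ih.mul h

theorem sum {ι : Type*} {s : Finset ι} {f : ι → ℚ} {g : ι → K}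
    (h : ∀ i ∈ s, ReducesTo (f i) (g i)) : ReducesTo (∑ i ∈ s, f i) (∑ i ∈ s, g i) := by
  classical
  induction s using Finset.induction_on with
  | empty => simpa using natCast (K := K) 0
  | insert a s ha ih =>
    rw [sum_insert ha, sum_insert ha]
    exact (h a (mem_insert_self a s)).add (ih fun i hi => h i (mem_insert_of_mem hi))

protected theorem ratCongr {p : ℕ} [Fact p.Prime] {y : ZMod p} (h : ReducesTo x y)
    (h' : ReducesTo x' y) : ratCongr p 1 x x' := by
  obtain ⟨hden, hcast⟩ := h.sub h'
  have hnum : ((x - x').num : ZMod p) = 0 := by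
    rwa [sub_self, Rat.cast_def, div_eq_zero_iff, or_iff_left hden] at hcast
  obtain ⟨c, hc⟩ := (ZMod.intCast_zmod_eq_zero_iff_dvd _ p).mp hnum
  rw [Ne, ZMod.natCast_eq_zero_iff] at hden
  refine ⟨c / (x - x').den, ?_, fun hdvd => hden ?_⟩
  · conv_lhs => rw [← Rat.num_div_den (x - x'), hc]
    push_cast
    ring
  · have hdvd' := Rat.den_dvd c (x - x').den
    rw [Rat.divInt_eq_div, Int.cast_natCast] at hdvd'
    exact hdvd.trans (Int.natCast_dvd_natCast.mp hdvd')

end ReducesTo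

end Reduction

section Faulhaber

variable {K : Type*} [Field K]

theorem natCast_factorial_ne_zero_of_le {m n : ℕ} (hmn : m ≤ n) (hn : (n ! : K) ≠ 0) :
    (m ! : K) ≠ 0 :=
  ne_zero_of_dvd_ne_zero hn (Nat.cast_dvd_cast (Nat.factorial_dvd_factorial hmn))

theorem natCast_succ_ne_zero_of_factorial_ne_zero {n : ℕ} (hn : ((n + 1)! : K) ≠ 0) :
    ((n + 1 : ℕ) : K) ≠ 0 :=
  ne_zero_of_dvd_ne_zero hn (Nat.cast_dvd_cast (Nat.dvd_factorial n.succ_pos le_rfl))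

theorem bernoulli_eq_sub_sum_div (r : ℕ) :
    bernoulli r = (((if r = 0 then 1 else 0 : ℕ) : ℚ)
      - ∑ k ∈ range r, ((r + 1).choose k : ℚ) * bernoulli k) / (r + 1 : ℕ) := by
  have h := sum_bernoulli (r + 1)
  rw [sum_range_succ, Nat.choose_succ_self_right] at h
  rw [eq_div_iff (by positivity)]
  simp only [Nat.add_eq_right] at h
  push_cast at h ⊢
  linear_combination h

theorem reducesTo_bernoulli {r : ℕ} (hr : ((r + 1)! : K) ≠ 0) :
    ReducesTo (bernoulli r) (bernoulli r : K) := by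
  induction r using Nat.strong_induction_on with
  | _ r ih =>
    have hnum := (ReducesTo.natCast (K := K) (if r = 0 then 1 else 0)).sub
      (ReducesTo.sum fun k hk => (ReducesTo.natCast ((r + 1).choose k)).mul
        (ih k (mem_range.mp hk)
          (natCast_factorial_ne_zero_of_le (Nat.succ_le_succ (mem_range.mp hk).le) hr)))
    have hquot := hnum.div (ReducesTo.natCast (r + 1))
      (natCast_succ_ne_zero_of_factorial_ne_zero hr)
    rw [← bernoulli_eq_sub_sum_div] at hquot
    exact hquot.cast

theorem cast_bernoulli_one (htwo : (2 : K) ≠ 0) : (bernoulli 1 : K) = -1 / 2 := by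
  have h := ReducesTo.intCast_div (K := K) (-1) (d := 2) (by exact_mod_cast htwo)
  rw [bernoulli_one]
  exact_mod_cast h.cast_eq

/-- The value at `y` of Faulhaber's polynomial of exponent `N`, with its coefficients reduced to
`K`. -/
def faulhaber (N : ℕ) (y : K) : K :=
  ∑ i ∈ range (N + 1), (bernoulli i : K) * (N + 1).choose i * y ^ (N + 1 - i) / (N + 1 : ℕ)

theorem faulhaber_zero (N : ℕ) : faulhaber N (0 : K) = 0 := by
  refine sum_eq_zero fun i hi => ?_
  rw [mem_range] at hi
  rw [zero_pow (by omega), mul_zero, zero_div]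

theorem faulhaber_div_self (N : ℕ) {y : K} (hy : y ≠ 0) :
    faulhaber N y / y =
      ∑ i ∈ range (N + 1), (bernoulli i : K) * (N + 1).choose i / (N + 1 : ℕ) * y ^ (N - i) := by
  rw [faulhaber, sum_div]
  refine sum_congr rfl fun i hi => ?_
  rw [mem_range] at hi
  rw [Nat.succ_sub (by omega), pow_succ, div_eq_iff hy]
  ring

theorem bernoulli_eval_one_half (n : ℕ) :
    (Polynomial.bernoulli n).eval (1 / 2 : ℚ) = (2 / 2 ^ n - 1) * bernoulli n := by
  have h := bernoulliFun_eval_half n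
  rw [bernoulliFun, show (2 : ℝ)⁻¹ = algebraMap ℚ ℝ (1 / 2) by simp,
    Polynomial.eval_map_algebraMap, Polynomial.aeval_algebraMap_apply,
    Polynomial.coe_aeval_eq_eval, eq_ratCast] at h
  rw [← Rat.cast_inj (α := ℝ), h]
  push_cast
  rfl

theorem faulhaber_eq_bernoulli_eval_sub (N : ℕ) (x : ℚ) :
    faulhaber N x = ((Polynomial.bernoulli (N + 1)).eval x - bernoulli (N + 1)) / (N + 1 : ℕ) := by
  rw [faulhaber, ← sum_div, Polynomial.bernoulli, Polynomial.eval_finsetSum,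
    sum_range_succ _ (N + 1)]
  simp [Polynomial.eval_monomial]

theorem faulhaber_one_half (N : ℕ) :
    faulhaber N (1 / 2 : ℚ) = (2 / 2 ^ (N + 1) - 2) * bernoulli (N + 1) / (N + 1 : ℕ) := by
  rw [faulhaber_eq_bernoulli_eval_sub, bernoulli_eval_one_half]
  ring

theorem ReducesTo.faulhaber {N : ℕ} (hN : ((N + 1)! : K) ≠ 0) {x : ℚ} {y : K}
    (h : ReducesTo x y) : ReducesTo (faulhaber N x) (faulhaber N y) := by
  refine ReducesTo.sum fun i hi => ?_
  rw [mem_range] at hi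
  rw [Rat.cast_id]
  exact (((reducesTo_bernoulli (natCast_factorial_ne_zero_of_le (by omega) hN)).mul
    (natCast _)).mul (h.pow _)).div (natCast _) (natCast_succ_ne_zero_of_factorial_ne_zero hN)

theorem sum_range_pow_eq_faulhaber {N : ℕ} (hN : ((N + 1)! : K) ≠ 0) (n : ℕ) :
    ∑ j ∈ range n, (j : K) ^ N = faulhaber N (n : K) := by
  have hsum : ReducesTo (∑ j ∈ range n, (j : ℚ) ^ N) (∑ j ∈ range n, (j : K) ^ N) :=
    ReducesTo.sum fun j _ => (ReducesTo.natCast j).pow N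
  have hrat : ∑ j ∈ range n, (j : ℚ) ^ N = faulhaber N (n : ℚ) := by
    simpa [faulhaber] using sum_range_pow n N
  rw [hrat] at hsum
  exact hsum.unique ((ReducesTo.natCast n).faulhaber hN)

theorem sum_range_pow_of_two_mul_eq_one {N : ℕ} (hN : ((N + 2)! : K) ≠ 0) {n : ℕ}
    (hn : 2 * (n : K) = 1) :
    ∑ j ∈ range n, (j : K) ^ N = (2 / 2 ^ (N + 1) - 2) * bernoulli (N + 1) / (N + 1 : ℕ) := by
  have hN' : ((N + 1)! : K) ≠ 0 := natCast_factorial_ne_zero_of_le (by omega) hN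
  have htwo : ((2 : ℕ) : K) ≠ 0 := by
    rw [Nat.cast_ofNat]
    exact left_ne_zero_of_mul_eq_one hn
  have hn' : (n : K) = (1 : ℕ) / (2 : ℕ) := by
    rw [eq_div_iff htwo]
    push_cast
    linear_combination hn
  have two := ReducesTo.natCast (K := K) 2
  have hhalf := ((ReducesTo.natCast (K := K) 1).div two htwo).faulhaber hN'
  have hvalue := (((two.div (two.pow (N + 1)) (pow_ne_zero _ htwo)).sub two).mul
    (reducesTo_bernoulli hN)).div (ReducesTo.natCast (N + 1))
      (natCast_succ_ne_zero_of_factorial_ne_zero hN')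
  rw [sum_range_pow_eq_faulhaber hN', hn']
  push_cast at hhalf hvalue ⊢
  rw [faulhaber_one_half] at hhalf
  push_cast at hhalf
  exact hhalf.unique hvalue

end Faulhaber

theorem sum_range_two_mul {M : Type*} [AddCommMonoid M] (f : ℕ → M) (n : ℕ) :
    ∑ j ∈ range (2 * n), f j = ∑ k ∈ range n, (f (2 * k) + f (2 * k + 1)) := by
  induction n with
  | zero => simp
  | succ n ih => rw [mul_add_one, sum_range_succ, sum_range_succ, ih, sum_range_succ, add_assoc]

theorem sum_Icc_one_eq_sum_range {M : Type*} [AddCommMonoid M] (f : ℕ → M) (n : ℕ) :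
    ∑ k ∈ Icc 1 n, f k = ∑ k ∈ range n, f (k + 1) := by
  rw [range_eq_Ico, sum_Ico_add' f 0 n 1]
  rfl

theorem one_div_sq_div_succ {K : Type*} [Field K] {x : K} (hx : x ≠ 0) (hx1 : x + 1 ≠ 0) :
    1 / x ^ 2 / (x + 1) = 1 / x ^ 2 - (1 / x - 1 / (x + 1)) := by
  field_simp
  ring

theorem sum_range_choose_div_succ (n : ℕ) :
    ∑ j ∈ range (n + 1), (n.choose j : ℚ) / (j + 1 : ℕ) = (2 ^ (n + 1) - 1) / (n + 1 : ℕ) := by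
  have hn : ((n + 1 : ℕ) : ℚ) ≠ 0 := by positivity
  have hpow : ∑ j ∈ range (n + 1), ((n + 1).choose (j + 1) : ℚ) = 2 ^ (n + 1) - 1 := by
    rw [eq_sub_iff_add_eq]
    have h := Nat.sum_range_choose (n + 1)
    rw [sum_range_succ', Nat.choose_zero_right] at h
    exact_mod_cast h
  rw [eq_div_iff hn, ← hpow, sum_mul]
  refine sum_congr rfl fun j _ => ?_
  have h : ((n + 1 : ℕ) : ℚ) * n.choose j = (n + 1).choose (j + 1) * (j + 1 : ℕ) := by
    exact_mod_cast Nat.add_one_mul_choose_eq n j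
  rw [div_mul_eq_mul_div, mul_comm, h, mul_div_cancel_right₀ _ (by positivity)]

theorem two_mul_fermatQ {p : ℕ} (hp : p ≠ 0) :
    2 * fermatQ p = ∑ j ∈ range (p - 1), ((p - 1).choose j : ℚ) / (j + 1 : ℕ) := by
  obtain ⟨n, rfl⟩ := Nat.exists_eq_succ_of_ne_zero hp
  have h := sum_range_choose_div_succ n
  rw [sum_range_succ, Nat.choose_self, ← eq_sub_iff_add_eq] at h
  rw [fermatQ, Nat.succ_eq_add_one, Nat.add_sub_cancel, h]
  push_cast
  ring

section ResiduesModPrime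

variable {p : ℕ} [Fact p.Prime]

theorem zmod_natCast_ne_zero {n : ℕ} (h0 : 0 < n) (hn : n < p) : (n : ZMod p) ≠ 0 := by
  rw [Ne, ZMod.natCast_eq_zero_iff]
  exact Nat.not_dvd_of_pos_of_lt h0 hn

theorem zmod_factorial_ne_zero {n : ℕ} (hn : n < p) : (n ! : ZMod p) ≠ 0 := by
  rw [Ne, ZMod.natCast_eq_zero_iff, (Fact.out : p.Prime).dvd_factorial]
  exact hn.not_ge

theorem zmod_pow_pred_sub {n : ℕ} (hn0 : n ≠ 0) (hn : n < p - 1) (x : ZMod p) :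
    x ^ (p - 1 - n) = 1 / x ^ n := by
  rcases eq_or_ne x 0 with rfl | hx
  · rw [zero_pow hn0, zero_pow (by omega), div_zero]
  · rw [eq_div_iff (pow_ne_zero n hx), ← pow_add, Nat.sub_add_cancel hn.le,
      ZMod.pow_card_sub_one_eq_one hx]

theorem zmod_sum_range_pow_eq_zero {s : ℕ} (hs : s + 1 < p) :
    ∑ j ∈ range p, (j : ZMod p) ^ s = 0 := by
  rw [sum_range_pow_eq_faulhaber (zmod_factorial_ne_zero hs), ZMod.natCast_self, faulhaber_zero]

theorem zmod_sum_range_sub_pow {s : ℕ} (hs : Even s) (hs0 : s ≠ 0) (hsp : s + 1 < p)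
    {n : ℕ} (hn : n < p) :
    ∑ j ∈ range (p - n), (j : ZMod p) ^ s = -∑ j ∈ range (n + 1), (j : ZMod p) ^ s := by
  induction n with
  | zero => simp [zmod_sum_range_pow_eq_zero hsp, hs0]
  | succ n ih =>
    have h := ih (by omega)
    rw [show p - n = p - (n + 1) + 1 by omega, sum_range_succ, Nat.cast_sub hn.le,
      ZMod.natCast_self, zero_sub, hs.neg_pow] at h
    rw [sum_range_succ _ (n + 1)]
    linear_combination h

variable {m : ℕ}

theorem zmod_two_mul_add_one_eq_zero (hpm : p = 2 * m + 1) : 2 * (m : ZMod p) + 1 = 0 := by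
  have h : ((2 * m + 1 : ℕ) : ZMod p) = 0 := by rw [← hpm, ZMod.natCast_self]
  exact_mod_cast h

theorem zmod_two_ne_zero (hpm : p = 2 * m + 1) : (2 : ZMod p) ≠ 0 := fun h =>
  one_ne_zero (α := ZMod p) (by simpa [h] using zmod_two_mul_add_one_eq_zero hpm)

theorem zmod_sum_range_even_pow (hpm : p = 2 * m + 1) {s : ℕ} (hs0 : s ≠ 0) (hsp : s + 2 < p) :
    ∑ k ∈ range m, (2 * (k + 1) : ZMod p) ^ s
      = (1 - 2 ^ (s + 1)) * bernoulli (s + 1) / (s + 1 : ℕ) := by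
  have htwo := zmod_two_ne_zero hpm
  have hhalf : 2 * ((m + 1 : ℕ) : ZMod p) = 1 := by
    push_cast
    linear_combination zmod_two_mul_add_one_eq_zero hpm
  have hsum := sum_range_pow_of_two_mul_eq_one (zmod_factorial_ne_zero hsp) hhalf
  rw [sum_range_succ', Nat.cast_zero, zero_pow hs0, add_zero] at hsum
  simp only [mul_pow, ← mul_sum]
  push_cast at hsum ⊢
  rw [hsum]
  field_simp
  ring

theorem zmod_sum_range_even_pow_eq_zero (hpm : p = 2 * m + 1) {s : ℕ} (hs : Even s)
    (hs0 : s ≠ 0) (hsp : s + 1 < p) : ∑ k ∈ range m, (2 * (k + 1) : ZMod p) ^ s = 0 := by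
  have hsp' : s + 2 < p := by obtain ⟨t, rfl⟩ := hs; omega
  rw [zmod_sum_range_even_pow hpm hs0 hsp', bernoulli_eq_zero_of_odd hs.add_one (by omega),
    Rat.cast_zero, mul_zero, zero_div]

theorem zmod_sum_range_odd_pow_eq_zero (hpm : p = 2 * m + 1) {s : ℕ} (hs : Even s)
    (hs0 : s ≠ 0) (hsp : s + 1 < p) : ∑ k ∈ range m, (2 * k + 1 : ZMod p) ^ s = 0 := by
  have hall := zmod_sum_range_pow_eq_zero hsp
  rw [congrArg range hpm, sum_range_succ', sum_range_two_mul, sum_add_distrib] at hall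
  have heven : ∑ k ∈ range m, ((2 * k + 1 + 1 : ℕ) : ZMod p) ^ s = 0 := by
    exact_mod_cast zmod_sum_range_even_pow_eq_zero hpm hs hs0 hsp
  rw [heven, add_zero, Nat.cast_zero, zero_pow hs0, add_zero] at hall
  exact_mod_cast hall

theorem zmod_sum_range_sum_pow_div_even_eq_sum_bernoulli (hpm : p = 2 * m + 1) {N : ℕ}
    (hN : N + 1 < p) :
    ∑ k ∈ range m, (∑ j ∈ range (2 * (k + 1)), (j : ZMod p) ^ N) / (2 * (k + 1))
      = ∑ i ∈ range (N + 1), (bernoulli i : ZMod p) * (N + 1).choose i / (N + 1 : ℕ) *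
        ∑ k ∈ range m, (2 * (k + 1) : ZMod p) ^ (N - i) := by
  simp only [mul_sum]
  rw [sum_comm]
  refine sum_congr rfl fun k hk => ?_
  rw [mem_range] at hk
  have hk0 := zmod_natCast_ne_zero (p := p) (n := 2 * (k + 1)) (by omega) (by omega)
  have h := faulhaber_div_self N hk0
  rw [← sum_range_pow_eq_faulhaber (zmod_factorial_ne_zero hN)] at h
  exact_mod_cast h

theorem zmod_bernoulli_mul_sum_range_even_pow_eq_zero (hpm : p = 2 * m + 1) {N : ℕ} (hN : Even N)
    (hNp : N + 1 < p) {i : ℕ} (hi : i < N) (hi1 : i ≠ 1) :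
    (bernoulli i : ZMod p) * ∑ k ∈ range m, (2 * (k + 1) : ZMod p) ^ (N - i) = 0 := by
  rcases Nat.even_or_odd i with hi_even | hi_odd
  · rw [zmod_sum_range_even_pow_eq_zero hpm (hN.tsub hi_even) (by omega) (by omega), mul_zero]
  · have hi_gt : 1 < i := by have := hi_odd.pos; omega
    rw [bernoulli_eq_zero_of_odd hi_odd hi_gt, Rat.cast_zero, zero_mul]

theorem zmod_sum_range_sum_pow_div_even (hpm : p = 2 * m + 1) {N : ℕ} (hN : Even N) (hN0 : N ≠ 0)
    (hNp : N + 1 < p) :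
    ∑ k ∈ range m, (∑ j ∈ range (2 * (k + 1)), (j : ZMod p) ^ N) / (2 * (k + 1))
      = (m - (1 - 2 ^ N) / (2 * N)) * bernoulli N := by
  have hN_gt : 1 < N := by obtain ⟨t, rfl⟩ := hN; omega
  have hN_ne : (N : ZMod p) ≠ 0 := zmod_natCast_ne_zero (by omega) (by omega)
  have hN_succ : ((N + 1 : ℕ) : ZMod p) ≠ 0 := zmod_natCast_ne_zero N.succ_pos hNp
  have htwo := zmod_two_ne_zero hpm
  have hvanish : ∀ i ∈ range N, i ≠ 1 → (bernoulli i : ZMod p) * (N + 1).choose i / (N + 1 : ℕ) *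
      ∑ k ∈ range m, (2 * (k + 1) : ZMod p) ^ (N - i) = 0 := fun i hi hi1 => by
    linear_combination ((N + 1).choose i : ZMod p) / (N + 1 : ℕ) *
      zmod_bernoulli_mul_sum_range_even_pow_eq_zero hpm hN hNp (mem_range.mp hi) hi1
  rw [zmod_sum_range_sum_pow_div_even_eq_sum_bernoulli hpm hNp, sum_range_succ,
    sum_eq_single_of_mem 1 (mem_range.mpr hN_gt) hvanish,
    zmod_sum_range_even_pow hpm (by omega) (by omega), Nat.sub_add_cancel hN_gt.le,
    cast_bernoulli_one htwo, Nat.choose_one_right, Nat.choose_succ_self_right,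
    mul_div_cancel_right₀ _ hN_succ, mul_div_cancel_right₀ _ hN_succ, Nat.sub_self]
  simp only [pow_zero, sum_const, card_range, nsmul_eq_mul, mul_one]
  field_simp
  ring

theorem zmod_choose_pred {j : ℕ} (hj : j < p) : ((p - 1).choose j : ZMod p) = (-1) ^ j := by
  have hp := (Fact.out : p.Prime)
  induction j with
  | zero => simp
  | succ j ih =>
    have hpascal : p.choose (j + 1) = (p - 1).choose j + (p - 1).choose (j + 1) :=
      Nat.choose_eq_choose_pred_add hp.pos j.succ_pos
    have hdvd : (p.choose (j + 1) : ZMod p) = 0 := by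
      rw [ZMod.natCast_eq_zero_iff]
      exact hp.dvd_choose_self j.succ_ne_zero hj
    rw [hpascal, Nat.cast_add, ih (by omega)] at hdvd
    rw [pow_succ]
    linear_combination hdvd

theorem reducesTo_fermatQ (hpm : p = 2 * m + 1) :
    ReducesTo (fermatQ p)
      ((∑ k ∈ range m, (1 / (2 * k + 1) - 1 / (2 * (k + 1)) : ZMod p)) / 2) := by
  have htwo := zmod_two_ne_zero hpm
  have halternating : ∑ k ∈ range m, (1 / (2 * k + 1) - 1 / (2 * (k + 1)) : ZMod p)
      = ∑ j ∈ range (p - 1), (-1) ^ j / ((j + 1 : ℕ) : ZMod p) := by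
    rw [show p - 1 = 2 * m by omega, sum_range_two_mul]
    refine sum_congr rfl fun k _ => ?_
    rw [pow_succ, pow_mul, neg_one_sq, one_pow]
    push_cast
    ring
  have hdouble : ReducesTo (2 * fermatQ p)
      (∑ j ∈ range (p - 1), (-1) ^ j / ((j + 1 : ℕ) : ZMod p)) := by
    rw [two_mul_fermatQ (by omega)]
    refine ReducesTo.sum fun j hj => ?_
    rw [mem_range] at hj
    rw [← zmod_choose_pred (by omega : j < p)]
    exact (ReducesTo.natCast _).div (ReducesTo.natCast _)
      (zmod_natCast_ne_zero j.succ_pos (by omega))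
  have h := hdouble.div (ReducesTo.natCast 2) (by exact_mod_cast htwo)
  rw [Nat.cast_ofNat, mul_div_cancel_left₀ _ (two_ne_zero' ℚ), ← halternating] at h
  exact_mod_cast h

theorem reducesTo_harmonic2 (hp3 : 3 < p) {n : ℕ} (hn : n < p) :
    ReducesTo (harmonic2 n) (∑ j ∈ range (n + 1), (j : ZMod p) ^ (p - 3)) := by
  rw [harmonic2, sum_Icc_one_eq_sum_range, sum_range_succ', Nat.cast_zero, zero_pow (by omega),
    add_zero]
  refine ReducesTo.sum fun j hj => ?_
  rw [mem_range] at hj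
  have hj0 : ((j + 1 : ℕ) : ZMod p) ≠ 0 := zmod_natCast_ne_zero j.succ_pos (by omega)
  rw [show p - 3 = p - 1 - 2 by omega, zmod_pow_pred_sub two_ne_zero (by omega)]
  exact_mod_cast (ReducesTo.natCast 1).div ((ReducesTo.natCast (j + 1)).pow 2) (pow_ne_zero 2 hj0)

theorem zmod_sum_range_sum_pow_div_odd_eq_sub (hpm : p = 2 * m + 1) {s : ℕ} (hs : Even s)
    (hs0 : s ≠ 0) (hsp : s + 1 < p) :
    ∑ k ∈ range m, (∑ j ∈ range (2 * (k + 1) + 1), (j : ZMod p) ^ s) / (2 * k + 1)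
      = ∑ k ∈ range m, (∑ j ∈ range (2 * (k + 1)), (j : ZMod p) ^ s) / (2 * (k + 1))
        - ∑ k ∈ range m, (2 * k + 1 : ZMod p) ^ s / (2 * (k + 1)) := by
  -- The reflection `k ↦ m - 1 - k` turns the odd denominators into negatives of the even ones.
  rw [← sum_range_reflect, ← sum_sub_distrib]
  refine sum_congr rfl fun k hk => ?_
  rw [mem_range] at hk
  have hden : 2 * ((m - 1 - k : ℕ) : ZMod p) + 1 = -(2 * (k + 1)) := by
    have h : ((2 * (m - 1 - k) + 1 + 2 * (k + 1) : ℕ) : ZMod p) = 0 := by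
      rw [show 2 * (m - 1 - k) + 1 + 2 * (k + 1) = p by omega, ZMod.natCast_self]
    push_cast at h
    linear_combination h
  rw [hden, show 2 * (m - 1 - k + 1) + 1 = p - 2 * k by omega,
    zmod_sum_range_sub_pow hs hs0 hsp (by omega), neg_div_neg_eq, ← sub_div,
    show 2 * (k + 1) = 2 * k + 1 + 1 by ring, sum_range_succ _ (2 * k + 1)]
  push_cast
  rw [add_sub_cancel_right]

theorem zmod_sum_range_odd_pow_div_even (hpm : p = 2 * m + 1) (hp3 : 3 < p) :
    ∑ k ∈ range m, (2 * k + 1 : ZMod p) ^ (p - 3) / (2 * (k + 1))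
      = -∑ k ∈ range m, (1 / (2 * k + 1) - 1 / (2 * (k + 1)) : ZMod p) := by
  have hodd := zmod_sum_range_odd_pow_eq_zero hpm (s := p - 3) ⟨m - 1, by omega⟩ (by omega)
    (by omega)
  rw [← zero_sub, ← hodd, ← sum_sub_distrib]
  refine sum_congr rfl fun k hk => ?_
  rw [mem_range] at hk
  have hx : (2 * k + 1 : ZMod p) ≠ 0 := by
    exact_mod_cast zmod_natCast_ne_zero (n := 2 * k + 1) (by omega) (by omega)
  have hx1 : (2 * k + 1 + 1 : ZMod p) ≠ 0 := by
    exact_mod_cast zmod_natCast_ne_zero (n := 2 * k + 1 + 1) (by omega) (by omega)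
  rw [show p - 3 = p - 1 - 2 by omega, zmod_pow_pred_sub two_ne_zero (by omega),
    show (2 * (k + 1) : ZMod p) = 2 * k + 1 + 1 by ring, one_div_sq_div_succ hx hx1]

theorem zmod_sum_range_sum_pow_sub_three_div_even (hpm : p = 2 * m + 1) (hp3 : 3 < p) :
    ∑ k ∈ range m, (∑ j ∈ range (2 * (k + 1)), (j : ZMod p) ^ (p - 3)) / (2 * (k + 1))
      = -(3 / 8) * bernoulli (p - 3) := by
  have htwo := zmod_two_ne_zero hpm
  have hthree : (3 : ZMod p) ≠ 0 := by
    exact_mod_cast zmod_natCast_ne_zero (p := p) three_pos hp3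
  have hpow : (2 : ZMod p) ^ (p - 3) = 1 / 2 ^ 2 :=
    zmod_pow_pred_sub two_ne_zero (by omega) 2
  have hexp : ((p - 3 : ℕ) : ZMod p) = -3 := by
    rw [Nat.cast_sub hp3.le, ZMod.natCast_self, zero_sub, Nat.cast_ofNat]
  have hm : (m : ZMod p) = -1 / 2 := by
    rw [eq_div_iff htwo]
    linear_combination zmod_two_mul_add_one_eq_zero hpm
  rw [zmod_sum_range_sum_pow_div_even hpm ⟨m - 1, by omega⟩ (by omega) (by omega), hpow, hexp, hm,
    show (8 : ZMod p) = 2 ^ 3 by norm_num]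
  field_simp
  ring

theorem zmod_sum_range_sum_pow_sub_three_div_odd (hpm : p = 2 * m + 1) (hp3 : 3 < p) :
    ∑ k ∈ range m, (∑ j ∈ range (2 * (k + 1) + 1), (j : ZMod p) ^ (p - 3)) / (2 * k + 1)
      = 2 * fermatQ p - 3 / 8 * bernoulli (p - 3) := by
  rw [zmod_sum_range_sum_pow_div_odd_eq_sub hpm ⟨m - 1, by omega⟩ (by omega) (by omega),
    zmod_sum_range_sum_pow_sub_three_div_even hpm hp3, zmod_sum_range_odd_pow_div_even hpm hp3,
    (reducesTo_fermatQ hpm).cast_eq, mul_div_cancel₀ _ (zmod_two_ne_zero hpm)]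
  ring

theorem reducesTo_harmonic2_summand (hpm : p = 2 * m + 1) (hp3 : 3 < p) {k : ℕ} (hk : k < m) :
    ReducesTo (((p : ℚ) / 2 - (k + 1 : ℕ)) * harmonic2 (2 * (k + 1)) /
        (((p : ℚ) + 1 - 2 * (k + 1 : ℕ)) * ((p : ℚ) + 2 * (k + 1 : ℕ))))
      ((∑ j ∈ range (2 * (k + 1) + 1), (j : ZMod p) ^ (p - 3)) / (2 * k + 1) / 2) := by
  have htwo := zmod_two_ne_zero hpm
  have hodd : (2 * k + 1 : ZMod p) ≠ 0 := by
    exact_mod_cast zmod_natCast_ne_zero (n := 2 * k + 1) (by omega) (by omega)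
  have hk1 : (k + 1 : ZMod p) ≠ 0 := by
    exact_mod_cast zmod_natCast_ne_zero (n := k + 1) (by omega) (by omega)
  have hden : ((p : ZMod p) + (1 : ℕ) - (2 : ℕ) * (k + 1 : ℕ)) * (p + (2 : ℕ) * (k + 1 : ℕ))
      = -(2 * k + 1) * (2 * (k + 1)) := by
    rw [ZMod.natCast_self]
    push_cast
    ring
  have hden0 : -(2 * k + 1 : ZMod p) * (2 * (k + 1)) ≠ 0 :=
    mul_ne_zero (neg_ne_zero.mpr hodd) (mul_ne_zero htwo hk1)
  have hp := ReducesTo.natCast (K := ZMod p) p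
  have one := ReducesTo.natCast (K := ZMod p) 1
  have two := ReducesTo.natCast (K := ZMod p) 2
  have hksucc := ReducesTo.natCast (K := ZMod p) (k + 1)
  have h := (((hp.div two (by exact_mod_cast htwo)).sub hksucc).mul
    (reducesTo_harmonic2 hp3 (by omega : 2 * (k + 1) < p))).div
    (((hp.add one).sub (two.mul hksucc)).mul (hp.add (two.mul hksucc))) (by rwa [hden])
  rw [hden, ZMod.natCast_self, zero_div, zero_sub] at h
  convert h using 1
  · push_cast
    ring
  · push_cast
    field_simp

theorem reducesTo_sum_harmonic2 (hpm : p = 2 * m + 1) (hp3 : 3 < p) :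
    ReducesTo (∑ k ∈ Icc 1 m,
        ((p : ℚ) / 2 - k) * harmonic2 (2 * k) / (((p : ℚ) + 1 - 2 * k) * ((p : ℚ) + 2 * k)))
      (fermatQ p - 3 / 16 * bernoulli (p - 3) : ZMod p) := by
  have hvalue : (fermatQ p - 3 / 16 * bernoulli (p - 3) : ZMod p)
      = (2 * fermatQ p - 3 / 8 * bernoulli (p - 3)) / 2 := by
    rw [sub_div, mul_div_cancel_left₀ _ (zmod_two_ne_zero hpm),
      show (16 : ZMod p) = 8 * 2 by norm_num, ← div_div]
    ring
  rw [hvalue, ← zmod_sum_range_sum_pow_sub_three_div_odd hpm hp3, sum_div,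
    sum_Icc_one_eq_sum_range]
  exact ReducesTo.sum fun k hk => reducesTo_harmonic2_summand hpm hp3 (mem_range.mp hk)

end ResiduesModPrime

theorem sum_H2_2k_congr (p : ℕ) (hp : p.Prime) (hp3 : 3 < p) :
    ratCongr p 1
      (∑ k ∈ Finset.Icc 1 ((p - 1) / 2),
        ((p : ℚ) / 2 - k) * harmonic2 (2 * k) / (((p : ℚ) + 1 - 2 * k) * ((p : ℚ) + 2 * k)))
      (fermatQ p - (3 / 16) * bernoulli (p - 3)) := by
  have : Fact p.Prime := ⟨hp⟩
  obtain ⟨m, hpm⟩ : ∃ m, p = 2 * m + 1 := hp.odd_of_ne_two (by omega)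
  have hlhs := reducesTo_sum_harmonic2 hpm hp3
  rw [show m = (p - 1) / 2 by omega] at hlhs
  have hsixteen : ((16 : ℕ) : ZMod p) ≠ 0 := by
    exact_mod_cast (show (2 : ZMod p) ^ 4 ≠ 0 from pow_ne_zero 4 (zmod_two_ne_zero hpm))
  have hbernoulli : ReducesTo (bernoulli (p - 3)) (bernoulli (p - 3) : ZMod p) :=
    reducesTo_bernoulli (zmod_factorial_ne_zero (by omega))
  have hcoeff := (ReducesTo.natCast 3).div (ReducesTo.natCast 16) hsixteen
  have hrhs := (reducesTo_fermatQ hpm).cast.sub (hcoeff.mul hbernoulli)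
  exact hlhs.ratCongr (by exact_mod_cast hrhs)
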